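/- Let d ≥ 3. There exists δ_d > 0 such that for every integer p ≥ 2 and every pair of distinct sites s₀, s_i of the torus T_p^d, the simple random walk started at s₀ satisfies P_{s₀}(τ_{s_i} < τ_{s₀}) ≥ δ_d; consequently, the expected number of returns of the walk to s₀ strictly before it first hits s_i is at most 1/δ_d. -/

import Mathlib

open scoped BigOperators

/-- One-step transition probability of the discrete-time simple random walk on the torus
`T_p^d = (ℤ/pℤ)^d`: the walk jumps to one of its `2d` nearest neighbours, chosen
uniformly at random. -/
noncomputable def srwStep (d p : ℕ) [NeZero p] (i j : Fin d → ZMod p) : ℝ :=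
  ((Finset.univ.filter fun m : Fin d × Bool =>
      j = Function.update i m.1 (i m.1 + (if m.2 then 1 else -1))).card : ℝ) / (2 * d)

/-- Probability of a given finite trajectory of the simple random walk. -/
noncomputable def srwPathProb (d p : ℕ) [NeZero p] {n : ℕ}
    (x : Fin (n + 1) → (Fin d → ZMod p)) : ℝ :=
  ∏ k : Fin n, srwStep d p (x k.castSucc) (x k.succ)

open scoped Classical in
/-- `P_{s₀}(τ_{s_i} < τ_{s₀})`: the probability that the simple random walk started at
`s₀` hits `s_i` strictly before returning to `s₀`, written as a sum over finite paths
from `s₀` to `s_i` avoiding `{s₀, s_i}` at all intermediate times. -/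
noncomputable def srwHitBeforeReturn (d p : ℕ) [NeZero p] (s₀ si : Fin d → ZMod p) : ℝ :=
  ∑' n : ℕ, ∑ x ∈ Finset.univ.filter
      (fun x : Fin (n + 2) → (Fin d → ZMod p) =>
        x 0 = s₀ ∧ x (Fin.last (n + 1)) = si ∧
        ∀ m : Fin (n + 2), m ≠ 0 → m ≠ Fin.last (n + 1) → x m ≠ s₀ ∧ x m ≠ si),
    srwPathProb d p x

open scoped Classical in
/-- The expected number of returns of the walk to `s₀` strictly before it first hits
`s_i`: the sum over `n ≥ 1` of `P_{s₀}(X_n = s₀, τ_{s_i} > n)`, written as a sum over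
finite paths from `s₀` back to `s₀` avoiding `s_i`. -/
noncomputable def srwExpectedReturns (d p : ℕ) [NeZero p] (s₀ si : Fin d → ZMod p) : ℝ :=
  ∑' n : ℕ, ∑ x ∈ Finset.univ.filter
      (fun x : Fin (n + 2) → (Fin d → ZMod p) =>
        x 0 = s₀ ∧ x (Fin.last (n + 1)) = s₀ ∧ ∀ m : Fin (n + 2), x m ≠ si),
    srwPathProb d p x


section Chain

variable {α : Type*} [Fintype α]

open scoped Classical in
/-- Total weight of the paths of length `n + 1` from `s` to `t` whose intermediate sites
satisfy `R`, for the kernel `P`. -/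
noncomputable def pathSum (P : α → α → ℝ) (R : α → Prop) (t : α) (n : ℕ) (s : α) : ℝ :=
  ∑ x ∈ Finset.univ.filter
      (fun x : Fin (n + 2) → α => x 0 = s ∧ x (Fin.last (n + 1)) = t ∧
        ∀ m : Fin (n + 2), m ≠ 0 → m ≠ Fin.last (n + 1) → R (x m)),
    ∏ k : Fin (n + 1), P (x k.castSucc) (x k.succ)

lemma sum_filter_eq_sum_cons {n : ℕ} {s : α} {q : (Fin (n + 1) → α) → Prop} [DecidablePred q]
    (hq : ∀ x, q x → x 0 = s) (F : (Fin (n + 1) → α) → ℝ) :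
    ∑ x ∈ Finset.univ.filter q, F x =
      ∑ y : Fin n → α, if q (Fin.cons s y) then F (Fin.cons s y) else 0 := by
  rw [Finset.sum_filter, ← (Fin.consEquiv fun _ : Fin (n + 1) => α).sum_comp,
    Fintype.sum_prod_type, Finset.sum_eq_single s]
  · rfl
  · intro b _ hb
    refine Finset.sum_eq_zero fun y _ => if_neg fun h => hb ?_
    simpa [Fin.consEquiv] using hq _ h
  · simp

open scoped Classical in
lemma pathSum_zero (P : α → α → ℝ) (R : α → Prop) (t s : α) :
    pathSum P R t 0 s = P s t := by
  rw [pathSum, sum_filter_eq_sum_cons fun x hx => hx.1, ← (Equiv.funUnique (Fin 1) α).symm.sum_comp,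
    Finset.sum_eq_single t]
  · rw [if_pos]
    · simp
    · refine ⟨by simp, by simp [Fin.last], fun m h0 h1 => ?_⟩
      exfalso
      fin_cases m <;> simp_all
  · intro b _ hb
    rw [if_neg]
    rintro ⟨-, h, -⟩
    exact hb (by simpa [Fin.last] using h)
  · simp

open scoped Classical in
lemma pathSum_succ (P : α → α → ℝ) (R : α → Prop) (t : α) (n : ℕ) (s : α) :
    pathSum P R t (n + 1) s = ∑ y, P s y * (if R y then pathSum P R t n y else 0) := by
  have hfib : ∀ y, P s y * (if R y then pathSum P R t n y else 0) =
      ∑ x : Fin (n + 2) → α, if x 0 = y then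
        (if R y ∧ x (Fin.last (n + 1)) = t ∧
          ∀ m : Fin (n + 2), m ≠ 0 → m ≠ Fin.last (n + 1) → R (x m) then
          P s y * ∏ k : Fin (n + 1), P (x k.castSucc) (x k.succ) else 0) else 0 := by
    intro y
    rw [pathSum, Finset.sum_filter]
    by_cases hR : R y
    · simp only [hR, if_true, true_and, Finset.mul_sum, mul_ite, mul_zero, ite_and]
    · simp [hR]
  simp_rw [hfib]
  rw [Finset.sum_comm, pathSum, sum_filter_eq_sum_cons fun x hx => hx.1]
  refine Finset.sum_congr rfl fun x _ => ?_
  rw [Finset.sum_ite_eq, if_pos (Finset.mem_univ _)]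
  congr 1
  · have key : (∀ m : Fin (n + 3), m ≠ 0 → m ≠ Fin.last (n + 2) →
        R ((Fin.cons s x : Fin (n + 3) → α) m)) ↔
        R (x 0) ∧ ∀ m : Fin (n + 2), m ≠ 0 → m ≠ Fin.last (n + 1) → R (x m) := by
      constructor
      · intro h
        have h' : ∀ m : Fin (n + 2), m ≠ Fin.last (n + 1) → R (x m) := fun m hm => by
          have := h m.succ (Fin.succ_ne_zero m)
            (by rw [← Fin.succ_last]; exact fun e => hm (Fin.succ_injective _ e))
          simpa using this
        exact ⟨h' 0 (by simp [Fin.ext_iff]), fun m _ hm => h' m hm⟩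
      · rintro ⟨h0, h⟩ m hm0 hm1
        obtain ⟨m, rfl⟩ := Fin.exists_succ_eq.mpr hm0
        rw [← Fin.succ_last] at hm1
        rw [Fin.cons_succ]
        by_cases h00 : m = 0
        · exact h00 ▸ h0
        · exact h m h00 fun e => hm1 (by rw [e])
    rw [key, ← Fin.succ_last, Fin.cons_succ]
    simp only [eq_iff_iff, Fin.cons_zero, true_and]
    tauto
  · rw [Fin.prod_univ_succ]
    simp

variable {P : α → α → ℝ}

lemma pathSum_nonneg (hP : ∀ x y, 0 ≤ P x y) (R : α → Prop) (t : α) (n : ℕ) (s : α) :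
    0 ≤ pathSum P R t n s :=
  Finset.sum_nonneg fun _ _ => Finset.prod_nonneg fun _ _ => hP _ _

open scoped Classical in
lemma sum_range_succ_pathSum (P : α → α → ℝ) (R : α → Prop) (t : α) (N : ℕ) (s : α) :
    ∑ n ∈ Finset.range (N + 1), pathSum P R t n s =
      ∑ y, P s y * ((if y = t then 1 else 0) +
        if R y then ∑ n ∈ Finset.range N, pathSum P R t n y else 0) := by
  rw [Finset.sum_range_succ', pathSum_zero]
  simp_rw [pathSum_succ, mul_add, Finset.sum_add_distrib]
  rw [Finset.sum_comm, add_comm]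
  congr 1
  · simp
  · refine Finset.sum_congr rfl fun y _ => ?_
    split_ifs <;> simp [Finset.mul_sum]

open scoped Classical in
/-- A function dominating one step of the iteration dominates the partial sums of `pathSum`. -/
lemma sum_range_pathSum_le (hP : ∀ x y, 0 ≤ P x y) {R : α → Prop} {t : α} {ψ : α → ℝ}
    (hψ : ∀ y, 0 ≤ ψ y)
    (hstep : ∀ y, (if y = t then 1 else 0) + (if R y then ∑ z, P y z * ψ z else 0) ≤ ψ y)
    (N : ℕ) (s : α) :
    ∑ n ∈ Finset.range N, pathSum P R t n s ≤ ∑ y, P s y * ψ y := by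
  induction N generalizing s with
  | zero => simpa using Finset.sum_nonneg fun y _ => mul_nonneg (hP s y) (hψ y)
  | succ N ih =>
    rw [sum_range_succ_pathSum]
    refine Finset.sum_le_sum fun y _ => mul_le_mul_of_nonneg_left ?_ (hP s y)
    refine le_trans ?_ (hstep y)
    gcongr
    split_ifs
    · exact ih y
    · exact le_rfl

open scoped Classical in
/-- For a symmetric stochastic kernel, a potential `g` with `g - P g = 𝟙_t - 𝟙_s` bounds
below the probability to hit `t` before returning to `s`, and above the number of returns
to `s` before hitting `t`. -/
lemma hit_and_returns_bound (hP : ∀ x y, 0 ≤ P x y) (hP1 : ∀ x, ∑ y, P x y = 1)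
    (hPs : ∀ x y, P x y = P y x) {s t : α} (hst : s ≠ t) {g : α → ℝ}
    (hg : ∀ x, g x - ∑ y, P x y * g y = (if x = t then 1 else 0) - (if x = s then 1 else 0))
    {C : ℝ} (hC : 0 < C) (hgC : g t - g s ≤ C) :
    1 / C ≤ ∑' n, pathSum P (fun y => y ≠ s ∧ y ≠ t) t n s ∧
      ∑' n, pathSum P (fun y => y ≠ t) s n s ≤ C := by
  set R : α → Prop := fun y => y ≠ s ∧ y ≠ t with hR
  have hpart : ∀ N x, ∑ n ∈ Finset.range N, pathSum P R t n x ≤ 1 := by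
    intro N x
    refine (sum_range_pathSum_le hP (ψ := fun _ => 1) (fun _ => zero_le_one) ?_ N x).trans ?_
    · intro y
      simp only [mul_one, hP1]
      by_cases h : y = t
      · simp [h, hR]
      · simp only [h, if_false, zero_add]
        split_ifs <;> norm_num
    · simp [hP1]
  have hnn := pathSum_nonneg hP R t
  have hsum : ∀ x, Summable fun n => pathSum P R t n x := fun x =>
    summable_of_sum_range_le (fun n => hnn n x) fun N => hpart N x
  set H : α → ℝ := fun x => ∑' n, pathSum P R t n x with hH
  have hH1 : ∀ x, H x ≤ 1 := fun x =>
    Real.tsum_le_of_sum_range_le (fun n => hnn n x) fun N => hpart N x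
  have hH0 : ∀ x, 0 ≤ H x := fun x => tsum_nonneg fun n => hnn n x
  set h : α → ℝ := fun y => (if y = t then 1 else 0) + if R y then H y else 0 with hh
  have hHh : ∀ x, H x = ∑ y, P x y * h y := by
    intro x
    have h1 : Filter.Tendsto (fun N => ∑ n ∈ Finset.range (N + 1), pathSum P R t n x)
        Filter.atTop (nhds (H x)) :=
      ((hsum x).hasSum.tendsto_sum_nat).comp (Filter.tendsto_add_atTop_nat 1)
    refine tendsto_nhds_unique h1 ?_
    simp_rw [sum_range_succ_pathSum]
    refine tendsto_finsetSum _ fun y _ => (Filter.Tendsto.const_mul _ ?_)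
    refine tendsto_const_nhds.add ?_
    split_ifs
    · exact (hsum y).hasSum.tendsto_sum_nat
    · exact tendsto_const_nhds
  have hht : h t = 1 := by simp [hh, hR]
  have hhs : h s = 0 := by simp [hh, hR, hst]
  have hhR : ∀ y, y ≠ s → y ≠ t → h y = H y := fun y h1 h2 => by simp [hh, hR, h1, h2]
  have hh1 : ∀ y, h y ≤ 1 := by
    intro y
    by_cases h1 : y = t
    · rw [h1, hht]
    by_cases h2 : y = s
    · rw [h2, hhs]; exact zero_le_one
    rw [hhR y h2 h1]; exact hH1 y
  have hself : ∀ u v : α → ℝ, ∑ x, u x * (v x - ∑ y, P x y * v y) =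
      ∑ x, v x * (u x - ∑ y, P x y * u y) := by
    intro u v
    simp only [mul_sub, Finset.sum_sub_distrib, Finset.mul_sum]
    congr 1
    · exact Finset.sum_congr rfl fun x _ => mul_comm _ _
    · rw [Finset.sum_comm]
      refine Finset.sum_congr rfl fun x _ => Finset.sum_congr rfl fun y _ => ?_
      rw [hPs y x]; ring
  have hdiff : ∀ x, h x - ∑ y, P x y * h y =
      (1 - H t) * (if x = t then 1 else 0) - H s * (if x = s then 1 else 0) := by
    intro x
    rw [← hHh]
    by_cases h1 : x = t
    · subst h1; simp [hht, hst.symm]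
    by_cases h2 : x = s
    · subst h2; simp [hhs, hst]
    simp [h1, h2, hhR]
  have hbal : 1 - H t = H s := by
    have := hself (fun _ => 1) h
    simp only [hdiff, mul_one, hP1, sub_self, mul_zero, one_mul, Finset.sum_sub_distrib,
      ← Finset.mul_sum, Finset.sum_ite_eq', Finset.sum_const_zero] at this
    simp at this
    linarith
  rw [hbal] at hdiff
  have hmain : 1 = H s * (g t - g s) := by
    have := hself h g
    simp only [hg, hdiff] at this
    simp [mul_sub, Finset.sum_sub_distrib, hht, hhs] at this
    linarith
  have hq : 1 / C ≤ H s := by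
    rw [div_le_iff₀ hC, hmain]
    exact mul_le_mul_of_nonneg_left hgC (hH0 s)
  have hq0 : 0 < H s := lt_of_lt_of_le (by positivity) hq
  refine ⟨hq, ?_⟩
  have hψ : ∀ y, 0 ≤ (1 - h y) / H s := fun y =>
    div_nonneg (sub_nonneg.2 (hh1 y)) hq0.le
  have hPψ : ∀ y, ∑ z, P y z * ((1 - h z) / H s) =
      (1 - h y) / H s + (if y = t then 1 else 0) - (if y = s then 1 else 0) := by
    intro y
    have : ∑ z, P y z * ((1 - h z) / H s) = (1 - ∑ z, P y z * h z) / H s := by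
      simp only [mul_div_assoc', mul_sub, mul_one, ← Finset.sum_div, Finset.sum_sub_distrib, hP1]
    rw [this]
    have := hdiff y
    field_simp
    linarith
  refine Real.tsum_le_of_sum_range_le (fun n => pathSum_nonneg hP _ _ _ _) fun N => ?_
  refine (sum_range_pathSum_le hP (ψ := fun y => (1 - h y) / H s) hψ ?_ N s).trans ?_
  · intro y
    simp only [hPψ]
    by_cases h1 : y = t
    · subst h1; simp [hht, hst.symm]
    · simp [h1]
  · rw [hPψ, hhs]
    have : 1 / H s ≤ C := by
      rw [div_le_iff₀ hC] at hq
      rw [div_le_iff₀ hq0]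
      linarith
    simp [hst] at *
    linarith

end Chain

section Step

variable {d p : ℕ} [NeZero p]

/-- The neighbour of `x` in direction `m.1` with orientation `m.2`. -/
def srwNeighbor (x : Fin d → ZMod p) (m : Fin d × Bool) : Fin d → ZMod p :=
  x + Pi.single m.1 (if m.2 then 1 else -1)

lemma srwStep_eq (x y : Fin d → ZMod p) :
    srwStep d p x y =
      ((Finset.univ.filter fun m : Fin d × Bool => y = srwNeighbor x m).card : ℝ) / (2 * d) := by
  have : ∀ m : Fin d × Bool,
      Function.update x m.1 (x m.1 + (if m.2 then 1 else -1)) = srwNeighbor x m := by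
    intro m
    ext j
    by_cases h : j = m.1
    · subst h; simp [srwNeighbor]
    · simp [srwNeighbor, h]
  simp only [srwStep, this]

lemma srwStep_nonneg (x y : Fin d → ZMod p) : 0 ≤ srwStep d p x y := by
  rw [srwStep]; positivity

lemma srwStep_symm (x y : Fin d → ZMod p) : srwStep d p x y = srwStep d p y x := by
  rw [srwStep_eq, srwStep_eq]
  congr 2
  refine Finset.card_equiv ((Equiv.refl _).prodCongr Equiv.boolNot) fun m => ?_
  have : ∀ a : Fin d, (Pi.single a (-1) : Fin d → ZMod p) = -Pi.single a 1 := fun a =>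
    Pi.single_neg a 1
  obtain ⟨a, b⟩ := m
  rw [Finset.mem_filter, Finset.mem_filter]
  cases b <;>
    simp only [srwNeighbor, Finset.mem_univ, true_and,
      Equiv.prodCongr_apply, Prod.map, Equiv.refl_apply, Equiv.boolNot_apply, Bool.not_true,
      Bool.not_false, if_true, if_false, Bool.false_eq_true, this] <;>
    constructor <;> intro h <;> rw [h] <;> abel

lemma sum_srwStep_mul (x : Fin d → ZMod p) (φ : (Fin d → ZMod p) → ℝ) :
    ∑ y, srwStep d p x y * φ y =
      (∑ j, (φ (x + Pi.single j 1) + φ (x - Pi.single j 1))) / (2 * d) := by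
  have h : ∀ y, srwStep d p x y * φ y =
      (∑ m : Fin d × Bool, if y = srwNeighbor x m then φ y else 0) / (2 * d) := by
    intro y
    rw [srwStep_eq, ← Finset.sum_filter, Finset.sum_const, nsmul_eq_mul]
    ring
  simp_rw [h]
  rw [← Finset.sum_div, Finset.sum_comm, Fintype.sum_prod_type]
  simp [srwNeighbor, Pi.single_neg, sub_eq_add_neg]

lemma sum_srwStep (hd : 0 < d) (x : Fin d → ZMod p) : ∑ y, srwStep d p x y = 1 := by
  have hd' : (d : ℝ) ≠ 0 := by positivity
  have := sum_srwStep_mul x fun _ => 1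
  simp only [mul_one, Finset.sum_const, Finset.card_univ, Fintype.card_fin, nsmul_eq_mul] at this
  rw [this]
  field_simp
  norm_num

end Step

section Fourier

variable {d p : ℕ} [NeZero p]

/-- The real character of frequency `k` on the torus. -/
noncomputable def torusCos (k z : Fin d → ZMod p) : ℝ := (ZMod.stdAddChar (k ⬝ᵥ z)).re

/-- The eigenvalue of `1 - P` on the character of frequency `k`. -/
noncomputable def srwEigenvalue (k : Fin d → ZMod p) : ℝ :=
  (∑ j, (1 - (ZMod.stdAddChar (k j)).re)) / d

lemma torusCos_zero_right (k : Fin d → ZMod p) : torusCos k 0 = 1 := by simp [torusCos]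

lemma torusCos_zero_left (z : Fin d → ZMod p) : torusCos 0 z = 1 := by simp [torusCos]

lemma neg_one_le_torusCos (k z : Fin d → ZMod p) : -1 ≤ torusCos k z := by
  have h := Complex.abs_re_le_norm (ZMod.stdAddChar (k ⬝ᵥ z))
  rw [AddChar.norm_apply] at h
  exact (abs_le.1 h).1

lemma torusCos_neg (k z : Fin d → ZMod p) : torusCos k (-z) = torusCos k z := by
  simp [torusCos, AddChar.map_neg_eq_conj]

lemma sum_srwStep_mul_torusCos (hd : 0 < d) (k a x : Fin d → ZMod p) :
    ∑ y, srwStep d p x y * torusCos k (y - a) =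
      (1 - srwEigenvalue k) * torusCos k (x - a) := by
  have hd' : (d : ℝ) ≠ 0 := by positivity
  have h : ∀ j, torusCos k (x + Pi.single j 1 - a) + torusCos k (x - Pi.single j 1 - a) =
      2 * torusCos k (x - a) * (1 - (1 - (ZMod.stdAddChar (k j)).re)) := by
    intro j
    rw [show x + Pi.single j 1 - a = (x - a) + Pi.single j 1 by abel,
      show x - Pi.single j 1 - a = (x - a) + -Pi.single j 1 by abel]
    simp only [torusCos, dotProduct_add, dotProduct_neg, dotProduct_single, mul_one,
      AddChar.map_add_eq_mul, AddChar.map_neg_eq_conj, Complex.mul_re, Complex.conj_re,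
      Complex.conj_im]
    ring
  rw [sum_srwStep_mul, srwEigenvalue]
  simp_rw [h]
  rw [← Finset.mul_sum, Finset.sum_sub_distrib]
  simp only [Finset.sum_const, Finset.card_univ, Fintype.card_fin, nsmul_eq_mul, mul_one]
  field_simp

lemma sum_torusCos (z : Fin d → ZMod p) :
    ∑ k, torusCos k z = if z = 0 then (p : ℝ) ^ d else 0 := by
  have hprod : ∀ (s : Finset (Fin d)) (f : Fin d → ZMod p),
      (ZMod.stdAddChar (∑ j ∈ s, f j) : ℂ) = ∏ j ∈ s, ZMod.stdAddChar (f j) := by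
    intro s f
    induction s using Finset.induction_on with
    | empty => simp
    | insert a s ha ih => rw [Finset.sum_insert ha, Finset.prod_insert ha,
        AddChar.map_add_eq_mul, ih]
  have h : ∑ k : Fin d → ZMod p, (ZMod.stdAddChar (k ⬝ᵥ z) : ℂ) =
      if z = 0 then (p : ℂ) ^ d else 0 := by
    simp only [dotProduct, hprod]
    rw [← Fintype.piFinset_univ,
      ← Finset.prod_univ_sum (fun _ => Finset.univ) fun j a => (ZMod.stdAddChar (a * z j) : ℂ)]
    simp only [AddChar.sum_mulShift _ (ZMod.isPrimitive_stdAddChar p), ZMod.card]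
    split_ifs with hz
    · simp [hz]
    · obtain ⟨j, hj⟩ := Function.ne_iff.1 hz
      exact Finset.prod_eq_zero (Finset.mem_univ j) (by rw [if_neg (by simpa using hj), Nat.cast_zero])
  have h2 := congrArg Complex.re h
  rw [Complex.re_sum] at h2
  simp only [torusCos]
  rw [h2]
  split_ifs
  · exact_mod_cast Complex.ofReal_re ((p : ℝ) ^ d)
  · simp

/-- `max 1 |a|`, where `|a|` is the distance from `a` to `0` in `ℤ/pℤ`. -/
def posDist (a : ZMod p) : ℕ := max 1 a.valMinAbs.natAbs

lemma one_sub_re_stdAddChar_ge (a : ZMod p) :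
    8 / (p : ℝ) ^ 2 * (a.valMinAbs.natAbs : ℝ) ^ 2 ≤ 1 - (ZMod.stdAddChar a).re := by
  have hp : (0 : ℝ) < p := Nat.cast_pos.2 (NeZero.pos p)
  have h1 : (ZMod.stdAddChar a).re = Real.cos (2 * Real.pi * a.valMinAbs / p) := by
    conv_lhs => rw [← ZMod.coe_valMinAbs a, ZMod.stdAddChar_coe]
    rw [← Complex.exp_ofReal_mul_I_re]
    congr 2
    push_cast
    ring
  have habs : ((a.valMinAbs.natAbs : ℝ)) = |(a.valMinAbs : ℝ)| := by
    rw [Nat.cast_natAbs, Int.cast_abs]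
  have h2 : |(a.valMinAbs : ℝ)| * 2 ≤ p := by
    rw [← habs]
    have := ZMod.natAbs_valMinAbs_le a
    have : a.valMinAbs.natAbs * 2 ≤ p := by omega
    exact_mod_cast this
  have h3 : |2 * Real.pi * a.valMinAbs / p| ≤ Real.pi := by
    rw [abs_div, abs_mul, abs_of_pos Real.two_pi_pos, abs_of_pos hp, div_le_iff₀ hp]
    nlinarith [Real.pi_pos]
  have h4 := Real.cos_le_one_sub_mul_cos_sq h3
  rw [h1, habs, sq_abs]
  have : 2 / Real.pi ^ 2 * (2 * Real.pi * a.valMinAbs / p) ^ 2 =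
      8 / (p : ℝ) ^ 2 * (a.valMinAbs : ℝ) ^ 2 := by
    have := Real.pi_ne_zero
    field_simp
    ring
  linarith

lemma srwEigenvalue_ge (hd : 0 < d) {k : Fin d → ZMod p} (hk : k ≠ 0) :
    8 / ((p : ℝ) ^ 2 * (d + 1)) * ∏ j, (posDist (k j) : ℝ) ^ (2 / d : ℝ) ≤ srwEigenvalue k := by
  have hp : (0 : ℝ) < p := Nat.cast_pos.2 (NeZero.pos p)
  have hd' : (0 : ℝ) < d := Nat.cast_pos.2 hd
  have h1 : (∏ j, (posDist (k j) : ℝ) ^ (2 / d : ℝ)) ≤ (∑ j, (posDist (k j) : ℝ) ^ 2) / d := by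
    have := Real.geom_mean_le_arith_mean_weighted Finset.univ (fun _ : Fin d => 1 / (d : ℝ))
      (fun j => (posDist (k j) : ℝ) ^ 2) (fun _ _ => by positivity)
      (by simp [hd'.ne']) (fun _ _ => by positivity)
    rw [← Finset.mul_sum, one_div_mul_eq_div] at this
    refine le_trans (le_of_eq ?_) this
    refine Finset.prod_congr rfl fun j _ => ?_
    rw [← Real.rpow_natCast, ← Real.rpow_mul (Nat.cast_nonneg _)]
    congr 1
    push_cast
    ring
  have h2 : (1 : ℝ) ≤ ∑ j, ((k j).valMinAbs.natAbs : ℝ) ^ 2 := by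
    obtain ⟨j, hj⟩ := Function.ne_iff.1 hk
    have hj' : 1 ≤ (k j).valMinAbs.natAbs := by
      rw [Nat.one_le_iff_ne_zero, Ne, Int.natAbs_eq_zero, ZMod.valMinAbs_eq_zero]
      exact hj
    have hj1 : (1 : ℝ) ≤ (k j).valMinAbs.natAbs := by exact_mod_cast hj'
    refine (one_le_pow₀ hj1 : (1 : ℝ) ≤ _ ^ 2).trans ?_
    exact Finset.single_le_sum (f := fun j => ((k j).valMinAbs.natAbs : ℝ) ^ 2)
      (fun _ _ => by positivity) (Finset.mem_univ j)
  have h3 : ∑ j, (posDist (k j) : ℝ) ^ 2 ≤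
      (d + 1) * ∑ j, ((k j).valMinAbs.natAbs : ℝ) ^ 2 := by
    have : ∑ j, (posDist (k j) : ℝ) ^ 2 ≤ ∑ j, (1 + ((k j).valMinAbs.natAbs : ℝ) ^ 2) := by
      refine Finset.sum_le_sum fun j _ => ?_
      have : posDist (k j) ^ 2 ≤ 1 + (k j).valMinAbs.natAbs ^ 2 := by
        rcases max_choice 1 (k j).valMinAbs.natAbs with h | h <;> rw [posDist, h] <;> omega
      exact_mod_cast this
    rw [Finset.sum_add_distrib] at this
    simp only [Finset.sum_const, Finset.card_univ, Fintype.card_fin, nsmul_eq_mul,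
      mul_one] at this
    nlinarith
  have h4 : 8 / (p : ℝ) ^ 2 * ∑ j, ((k j).valMinAbs.natAbs : ℝ) ^ 2 ≤
      ∑ j, (1 - (ZMod.stdAddChar (k j)).re) := by
    rw [Finset.mul_sum]
    exact Finset.sum_le_sum fun j _ => one_sub_re_stdAddChar_ge (k j)
  calc _ ≤ 8 / ((p : ℝ) ^ 2 * (d + 1)) *
        (((d + 1) * ∑ j, ((k j).valMinAbs.natAbs : ℝ) ^ 2) / d) := by
        gcongr
        exact h1.trans (by gcongr)
    _ = (8 / (p : ℝ) ^ 2 * ∑ j, ((k j).valMinAbs.natAbs : ℝ) ^ 2) / d := by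
        field_simp
    _ ≤ _ := by
        rw [srwEigenvalue]
        gcongr

lemma sum_range_rpow_le {r : ℝ} (hr : 0 < r) (hr1 : r ≤ 1) (n : ℕ) :
    ∑ i ∈ Finset.range n, ((i + 1 : ℕ) : ℝ) ^ (r - 1) ≤ (n : ℝ) ^ r / r := by
  induction n with
  | zero => simp [Real.zero_rpow hr.ne']
  | succ n ih =>
    rw [Finset.sum_range_succ]
    have hn : (0 : ℝ) < (n + 1 : ℕ) := by positivity
    have h1 := rpow_one_add_le_one_add_mul_self (s := -(1 / ((n + 1 : ℕ) : ℝ)))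
      (by rw [neg_le_neg_iff, div_le_one hn]; push_cast; linarith [(Nat.cast_nonneg n : (0:ℝ) ≤ n)])
      hr.le hr1
    have h2 : (n : ℝ) = ((n + 1 : ℕ) : ℝ) * (1 + -(1 / ((n + 1 : ℕ) : ℝ))) := by
      field_simp
      push_cast
      ring
    have h0 : 0 ≤ 1 + -(1 / ((n + 1 : ℕ) : ℝ)) := by
      by_contra h
      have : (n : ℝ) < 0 := by
        rw [h2]
        exact mul_neg_of_pos_of_neg hn (not_le.1 h)
      exact absurd this (not_lt.2 (Nat.cast_nonneg n))
    have h3 : (n : ℝ) ^ r ≤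
        ((n + 1 : ℕ) : ℝ) ^ r - r * ((n + 1 : ℕ) : ℝ) ^ (r - 1) := by
      rw [Real.rpow_sub_one hn.ne']
      conv_lhs => rw [h2, Real.mul_rpow hn.le h0]
      calc _ ≤ ((n + 1 : ℕ) : ℝ) ^ r * (1 + r * -(1 / ((n + 1 : ℕ) : ℝ))) := by gcongr
        _ = _ := by ring
    calc _ ≤ (n : ℝ) ^ r / r + ((n + 1 : ℕ) : ℝ) ^ (r - 1) := by gcongr
      _ = ((n : ℝ) ^ r + r * ((n + 1 : ℕ) : ℝ) ^ (r - 1)) / r := by field_simp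
      _ ≤ _ := by
        gcongr
        linarith

lemma sum_posDist_rpow_le {r : ℝ} (hr : 0 < r) (hr1 : r ≤ 1) :
    ∑ a : ZMod p, (posDist a : ℝ) ^ (r - 1) ≤ (1 + 2 / r) * (p : ℝ) ^ r := by
  have hp : 1 ≤ p := NeZero.pos p
  have hp1 : (1 : ℝ) ≤ p := by exact_mod_cast hp
  set F : ℕ → ℝ := fun n => (n : ℝ) ^ (r - 1) with hF
  have hF0 : ∀ n, 0 ≤ F n := fun n => by positivity
  have h1 : ∑ a : ZMod p, (posDist a : ℝ) ^ (r - 1) =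
      ∑ v ∈ Finset.range p, F (max 1 (min v (p - v))) := by
    refine Finset.sum_bij (fun a _ => a.val) (fun a _ => by simpa using a.val_lt)
      (fun a _ b _ h => ZMod.val_injective p h)
      (fun v hv => ⟨(v : ZMod p), Finset.mem_univ _, ?_⟩) fun a _ => ?_
    · exact ZMod.val_cast_of_lt (Finset.mem_range.1 hv)
    · simp only [hF, posDist, ZMod.valMinAbs_natAbs_eq_min]
  have h2 : ∀ v, F (max 1 (min v (p - v))) ≤ F (max 1 v) + F (max 1 (p - v)) := by
    intro v
    rcases min_choice v (p - v) with h | h <;> rw [h]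
    · exact le_add_of_nonneg_right (hF0 _)
    · exact le_add_of_nonneg_left (hF0 _)
  have h3 : ∑ v ∈ Finset.range p, F (max 1 (p - v)) = ∑ v ∈ Finset.range p, F (v + 1) := by
    rw [← Finset.sum_range_reflect]
    refine Finset.sum_congr rfl fun v hv => ?_
    have := Finset.mem_range.1 hv
    congr 1
    omega
  have h4 : ∑ v ∈ Finset.range p, F (max 1 v) ≤ 1 + ∑ v ∈ Finset.range p, F (v + 1) := by
    obtain ⟨n, rfl⟩ : ∃ n, p = n + 1 := ⟨p - 1, by omega⟩
    rw [Finset.sum_range_succ', Finset.sum_range_succ]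
    have h5 : F (max 1 0) = 1 := by simp [hF]
    have h6 : ∀ v, max 1 (v + 1) = v + 1 := fun v => by omega
    simp only [h5, h6]
    linarith [hF0 (n + 1)]
  have h5 := sum_range_rpow_le hr hr1 p
  have h6 : 1 ≤ (p : ℝ) ^ r := Real.one_le_rpow hp1 hr.le
  calc _ ≤ ∑ v ∈ Finset.range p, (F (max 1 v) + F (max 1 (p - v))) := by
        rw [h1]
        exact Finset.sum_le_sum fun v _ => h2 v
    _ ≤ 1 + 2 * ((p : ℝ) ^ r / r) := by
        rw [Finset.sum_add_distrib, h3]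
        linarith
    _ ≤ (p : ℝ) ^ r + 2 * ((p : ℝ) ^ r / r) := by gcongr
    _ = _ := by ring

/-- A bound for the Green function of the simple random walk on `T_p^d`, uniform in `p`. -/
noncomputable def greenBound (d : ℕ) : ℝ :=
  ((d + 1) / 8) * (1 + 2 / (1 - 2 / d)) ^ d

lemma greenBound_pos (hd : 3 ≤ d) : 0 < greenBound d := by
  have hd' : (3 : ℝ) ≤ d := by exact_mod_cast hd
  have : (0 : ℝ) < 1 - 2 / d := by
    rw [sub_pos, div_lt_one (by linarith)]; linarith
  rw [greenBound]
  positivity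

lemma srwEigenvalue_pos (hd : 0 < d) {k : Fin d → ZMod p} (hk : k ≠ 0) :
    0 < srwEigenvalue k := by
  refine lt_of_lt_of_le ?_ (srwEigenvalue_ge hd hk)
  have hp : (0 : ℝ) < p := Nat.cast_pos.2 (NeZero.pos p)
  have : ∀ j, (0 : ℝ) < posDist (k j) := fun j =>
    Nat.cast_pos.2 (lt_of_lt_of_le one_pos (le_max_left _ _))
  have := Finset.prod_pos fun j (_ : j ∈ Finset.univ) => Real.rpow_pos_of_pos (this j) (2 / d : ℝ)
  positivity

lemma sum_inv_srwEigenvalue_le (hd : 3 ≤ d) :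
    ∑ k ∈ Finset.univ.erase (0 : Fin d → ZMod p), (srwEigenvalue k)⁻¹ ≤
      greenBound d * (p : ℝ) ^ d := by
  have hp : (0 : ℝ) < p := Nat.cast_pos.2 (NeZero.pos p)
  have hd' : (3 : ℝ) ≤ d := by exact_mod_cast hd
  have hr : (0 : ℝ) < 1 - 2 / d := by
    rw [sub_pos, div_lt_one (by linarith)]; linarith
  have hr1 : (1 : ℝ) - 2 / d ≤ 1 := by
    have : (0 : ℝ) ≤ 2 / d := by positivity
    linarith
  have hpd : ∀ a : ZMod p, (0 : ℝ) < posDist a := fun a =>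
    Nat.cast_pos.2 (lt_of_lt_of_le one_pos (le_max_left _ _))
  have h1 : ∀ k ∈ Finset.univ.erase (0 : Fin d → ZMod p), (srwEigenvalue k)⁻¹ ≤
      (p : ℝ) ^ 2 * (d + 1) / 8 * ∏ j, (posDist (k j) : ℝ) ^ ((1 - 2 / d : ℝ) - 1) := by
    intro k hk
    have hpos := Finset.prod_pos fun j (_ : j ∈ Finset.univ) =>
      Real.rpow_pos_of_pos (hpd (k j)) (2 / d : ℝ)
    refine (inv_anti₀ (by positivity)
      (srwEigenvalue_ge (by omega) (Finset.ne_of_mem_erase hk))).trans (le_of_eq ?_)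
    rw [mul_inv, inv_div, ← Finset.prod_inv_distrib]
    congr 1
    refine Finset.prod_congr rfl fun j _ => ?_
    rw [← Real.rpow_neg (hpd _).le]
    congr 1
    ring
  have h2 : ∑ k : Fin d → ZMod p, ∏ j, (posDist (k j) : ℝ) ^ ((1 - 2 / d : ℝ) - 1) =
      (∑ a : ZMod p, (posDist a : ℝ) ^ ((1 - 2 / d : ℝ) - 1)) ^ d := by
    rw [← Fintype.piFinset_univ, ← Finset.prod_univ_sum (fun _ => Finset.univ)
      fun (_ : Fin d) (a : ZMod p) => (posDist a : ℝ) ^ ((1 - 2 / d : ℝ) - 1)]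
    simp
  have h3 : ((p : ℝ) ^ (1 - 2 / d : ℝ)) ^ d * (p : ℝ) ^ 2 = (p : ℝ) ^ d := by
    rw [← Real.rpow_natCast, ← Real.rpow_mul hp.le, ← Real.rpow_natCast (p : ℝ) 2,
      ← Real.rpow_add hp, ← Real.rpow_natCast]
    congr 1
    field_simp
    push_cast
    ring
  calc _ ≤ ∑ k ∈ Finset.univ.erase (0 : Fin d → ZMod p),
        (p : ℝ) ^ 2 * (d + 1) / 8 * ∏ j, (posDist (k j) : ℝ) ^ ((1 - 2 / d : ℝ) - 1) :=
        Finset.sum_le_sum h1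
    _ ≤ ∑ k : Fin d → ZMod p,
        (p : ℝ) ^ 2 * (d + 1) / 8 * ∏ j, (posDist (k j) : ℝ) ^ ((1 - 2 / d : ℝ) - 1) :=
        Finset.sum_le_sum_of_subset_of_nonneg (Finset.erase_subset _ _)
          fun k _ _ => by positivity
    _ = (p : ℝ) ^ 2 * (d + 1) / 8 *
        (∑ a : ZMod p, (posDist a : ℝ) ^ ((1 - 2 / d : ℝ) - 1)) ^ d := by
        rw [← Finset.mul_sum, h2]
    _ ≤ (p : ℝ) ^ 2 * (d + 1) / 8 *
        ((1 + 2 / (1 - 2 / d)) * (p : ℝ) ^ (1 - 2 / d : ℝ)) ^ d := by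
        gcongr
        exact sum_posDist_rpow_le hr hr1
    _ = ((d + 1) / 8) * (1 + 2 / (1 - 2 / d)) ^ d *
        (((p : ℝ) ^ (1 - 2 / d : ℝ)) ^ d * (p : ℝ) ^ 2) := by
        rw [mul_pow]; ring
    _ = _ := by rw [h3, greenBound]

/-- There is a potential for the unit current from `t` to `s`, with potential difference
bounded uniformly in `p`. -/
lemma exists_potential (hd : 3 ≤ d) (s t : Fin d → ZMod p) :
    ∃ g : (Fin d → ZMod p) → ℝ,
      (∀ x, g x - ∑ y, srwStep d p x y * g y =
        (if x = t then 1 else 0) - (if x = s then 1 else 0)) ∧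
      g t - g s ≤ 4 * greenBound d := by
  have hp : (0 : ℝ) < (p : ℝ) ^ d := pow_pos (Nat.cast_pos.2 (NeZero.pos p)) d
  set K := Finset.univ.erase (0 : Fin d → ZMod p) with hK
  refine ⟨fun x => (∑ k ∈ K, (srwEigenvalue k)⁻¹ *
    (torusCos k (x - t) - torusCos k (x - s))) / (p : ℝ) ^ d, fun x => ?_, ?_⟩
  · have h1 : ∑ y, srwStep d p x y * ((∑ k ∈ K, (srwEigenvalue k)⁻¹ *
        (torusCos k (y - t) - torusCos k (y - s))) / (p : ℝ) ^ d) =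
        (∑ k ∈ K, (srwEigenvalue k)⁻¹ * ((1 - srwEigenvalue k) *
          (torusCos k (x - t) - torusCos k (x - s)))) / (p : ℝ) ^ d := by
      simp only [mul_sub (1 - srwEigenvalue _), ← sum_srwStep_mul_torusCos (by omega : 0 < d)]
      simp only [← Finset.sum_sub_distrib, Finset.mul_sum, Finset.sum_div]
      rw [Finset.sum_comm]
      refine Finset.sum_congr rfl fun k _ => Finset.sum_congr rfl fun y _ => ?_
      ring
    rw [h1, ← sub_div, ← Finset.sum_sub_distrib]
    have h2 : ∀ k ∈ K, (srwEigenvalue k)⁻¹ * (torusCos k (x - t) - torusCos k (x - s)) -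
        (srwEigenvalue k)⁻¹ * ((1 - srwEigenvalue k) *
          (torusCos k (x - t) - torusCos k (x - s))) =
        torusCos k (x - t) - torusCos k (x - s) := by
      intro k hk
      have := (srwEigenvalue_pos (by omega : 0 < d) (Finset.ne_of_mem_erase hk)).ne'
      field_simp
      ring
    rw [Finset.sum_congr rfl h2, Finset.sum_erase _ (by simp [torusCos_zero_left]),
      Finset.sum_sub_distrib, sum_torusCos, sum_torusCos, sub_div]
    simp only [sub_eq_zero, ite_div, zero_div, div_self hp.ne']
  · simp only [sub_self, torusCos_zero_right]
    rw [← sub_div, div_le_iff₀ hp, ← Finset.sum_sub_distrib, mul_assoc]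
    refine le_trans ?_ (mul_le_mul_of_nonneg_left (sum_inv_srwEigenvalue_le hd) (by norm_num))
    rw [Finset.mul_sum]
    refine Finset.sum_le_sum fun k hk => ?_
    have h0 := inv_pos.2 (srwEigenvalue_pos (by omega : 0 < d) (Finset.ne_of_mem_erase hk))
    have h1 := neg_one_le_torusCos k (t - s)
    have h2 := torusCos_neg k (t - s)
    rw [neg_sub] at h2
    rw [h2]
    nlinarith

end Fourier

/-- **Lemma 3 (kernel estimate).** For `d ≥ 3` there is `δ_d > 0` such that for every
`p ≥ 2` and every pair of distinct sites `s₀ ≠ s_i` of the torus `T_p^d`, the simple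
random walk started at `s₀` hits `s_i` before returning to `s₀` with probability at
least `δ_d`; consequently the expected number of returns to `s₀` strictly before
hitting `s_i` is at most `1/δ_d`. -/
theorem srw_hit_before_return_unif_pos (d : ℕ) (hd : 3 ≤ d) :
    ∃ δ > (0 : ℝ), ∀ (p : ℕ) (hp : 2 ≤ p), ∀ s₀ si : Fin d → ZMod p, s₀ ≠ si →
      δ ≤ @srwHitBeforeReturn d p ⟨by omega⟩ s₀ si ∧
      @srwExpectedReturns d p ⟨by omega⟩ s₀ si ≤ 1 / δ := by
  have hC : 0 < 4 * greenBound d := mul_pos four_pos (greenBound_pos hd)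
  refine ⟨1 / (4 * greenBound d), one_div_pos.2 hC, fun p hp s₀ si hne => ?_⟩
  have : NeZero p := ⟨by omega⟩
  obtain ⟨g, hg, hgC⟩ := exists_potential hd s₀ si
  obtain ⟨h1, h2⟩ := hit_and_returns_bound srwStep_nonneg (sum_srwStep (by omega : 0 < d))
    srwStep_symm hne (by convert hg) hC hgC
  refine ⟨h1.trans (le_of_eq ?_), le_trans (le_of_eq ?_) (h2.trans_eq (one_div_one_div _).symm)⟩
  · refine tsum_congr fun n => Finset.sum_congr ?_ fun _ _ => rfl
    ext x
    simp only [Finset.mem_filter]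
  refine tsum_congr fun n => Finset.sum_congr ?_ fun _ _ => rfl
  ext x
  simp only [Finset.mem_filter, Finset.mem_univ, true_and]
  refine and_congr_right fun h0 => and_congr_right fun hl => ⟨fun h m _ _ => h m, fun h m => ?_⟩
  by_cases hm0 : m = 0
  · rwa [hm0, h0]
  by_cases hml : m = Fin.last (n + 1)
  · rwa [hml, hl]
  exact h m hm0 hml
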